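/- In S_7, the 57 permutations of the cyclic sequence generated from initial permutation [3,4,5,2,1] extended appropriately — formally: there exists a cyclic sequence of 57 distinct even permutations of S_5 such that consecutive elements (cyclically) differ by a push-to-the-top operation t_3 or t_5; i.e., there exists a (5,57,K)-snake. -/

import Mathlib

def adjTranspositions (n : ℕ) : Set (Equiv.Perm (Fin n)) :=
  {s | ∃ i j : Fin n, (j : ℕ) = (i : ℕ) + 1 ∧ s = Equiv.swap i j}

/-- Kendall's τ-distance on `S_n`. -/
noncomputable def kendall {n : ℕ} (σ π : Equiv.Perm (Fin n)) : ℕ :=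
  sInf {k | ∃ l : List (Equiv.Perm (Fin n)), l.length = k ∧
    (∀ s ∈ l, s ∈ adjTranspositions n) ∧ σ * l.prod = π}

/-- Push-to-the-top operation `t_{i+1}` (1-indexed). -/
def pushToTop {n : ℕ} (i : Fin n) (π : Equiv.Perm (Fin n)) : Equiv.Perm (Fin n) :=
  π * (Fin.cycleRange i)⁻¹

/-- Decimal codes of the 57 codewords (least significant digit is the first entry). -/
def snakeCode : List ℕ :=
  [43210, 43102, 43021, 30214, 30142, 30421, 4213, 4132, 41320, 41203, 41032, 10324,
   10243, 2431, 2314, 2143, 21430, 21304, 13042, 13420, 13204, 32041, 20413, 20134,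
   20341, 3412, 34120, 34201, 42013, 42130, 42301, 23014, 23140, 31402, 31024, 31240,
   12403, 12034, 12340, 23401, 34012, 40123, 1234, 1342, 1423, 14230, 14302, 14023,
   40231, 40312, 3124, 3241, 32410, 32104, 21043, 10432, 4321]

/-- Decimal codes of the inverses of the codewords. -/
def snakeInvCode : List ℕ :=
  [43210, 43021, 43102, 4213, 14023, 24103, 30214, 31024, 42130, 40231, 41032, 2143,
   10243, 21304, 2314, 10324, 21430, 2431, 13042, 23140, 3241, 14302, 20413, 1423,
   12403, 23014, 34120, 34201, 40312, 41320, 42301, 3412, 13420, 24031, 4132, 14230,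
   20341, 1342, 12340, 23401, 34012, 40123, 1234, 12034, 20134, 31240, 32041, 30142,
   41203, 42013, 3124, 13204, 24310, 4321, 10432, 21043, 32104]

/-- Which push-to-the-top operation is applied at each step (zero-indexed). -/
def snakeMove : List (Fin 5) :=
  [2, 2, 4, 2, 2, 4, 2, 4, 2, 2, 4, 2,
   4, 2, 2, 4, 2, 4, 2, 2, 4, 4, 2, 2,
   4, 4, 2, 4, 2, 2, 4, 2, 4, 2, 2, 4,
   2, 2, 4, 4, 4, 4, 2, 2, 4, 2, 2, 4,
   2, 4, 2, 4, 2, 4, 4, 4, 4]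

def snakeDigit (m : ℕ) (i : Fin 5) : Fin 5 :=
  ⟨(m / 10 ^ (i : ℕ)) % 10 % 5, Nat.mod_lt _ (by decide)⟩

def snakeFun (k : Fin 57) (i : Fin 5) : Fin 5 := snakeDigit (snakeCode.getD k 0) i

def snakeInv (k : Fin 57) (i : Fin 5) : Fin 5 := snakeDigit (snakeInvCode.getD k 0) i

set_option maxRecDepth 100000

theorem snake_left : ∀ k i, snakeInv k (snakeFun k i) = i := by decide +kernel

theorem snake_right : ∀ k i, snakeFun k (snakeInv k i) = i := by decide +kernel

def snakePerm (k : Fin 57) : Equiv.Perm (Fin 5) :=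
  ⟨snakeFun k, snakeInv k, snake_left k, snake_right k⟩

theorem snake_injective : Function.Injective snakePerm := by
  have h : ∀ k l : Fin 57, (∀ i, snakeFun k i = snakeFun l i) → k = l := by decide +kernel
  intro k l hkl
  exact h k l fun i => DFunLike.congr_fun hkl i

theorem snake_step (k : Fin 57) : ∃ i : Fin 5, Even (i : ℕ) ∧
    snakePerm (k + 1) = pushToTop i (snakePerm k) := by
  have h : ∀ k : Fin 57, Even ((snakeMove.getD k 0 : Fin 5) : ℕ) ∧
      ∀ j, snakeFun (k + 1) (Fin.cycleRange (snakeMove.getD k 0) j) = snakeFun k j := by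
    decide +kernel
  refine ⟨snakeMove.getD k 0, (h k).1, ?_⟩
  rw [pushToTop, eq_mul_inv_iff_mul_eq]
  ext j
  exact congrArg Fin.val ((h k).2 j)

theorem snake_sign (k : Fin 57) : Equiv.Perm.sign (snakePerm k) = 1 := by
  induction k using Fin.induction with
  | zero =>
    have h : snakePerm 0 = 1 := by
      ext i
      revert i
      decide +kernel
    rw [h, map_one]
  | succ k ih =>
    obtain ⟨i, hi, h⟩ := snake_step k.castSucc
    rw [Fin.coeSucc_eq_succ] at h
    rw [h, pushToTop, map_mul, ih, map_inv, Fin.sign_cycleRange, hi.neg_one_pow]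
    simp

theorem kendall_set_nonempty (σ π : Equiv.Perm (Fin 5)) :
    {k | ∃ l : List (Equiv.Perm (Fin 5)), l.length = k ∧
      (∀ s ∈ l, s ∈ adjTranspositions 5) ∧ σ * l.prod = π}.Nonempty := by
  have h : σ⁻¹ * π ∈ Submonoid.closure
      (Set.range fun i : Fin 4 => Equiv.swap i.castSucc i.succ) := by
    rw [Equiv.Perm.mclosure_swap_castSucc_succ]
    trivial
  obtain ⟨l, hl, hp⟩ := Submonoid.exists_list_of_mem_closure h
  refine ⟨l.length, l, rfl, fun s hs => ?_, by rw [hp, mul_inv_cancel_left]⟩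
  obtain ⟨i, rfl⟩ := hl s hs
  exact ⟨i.castSucc, i.succ, by simp, rfl⟩

theorem two_le_kendall (σ π : Equiv.Perm (Fin 5)) (hne : σ ≠ π)
    (hs : Equiv.Perm.sign σ = 1) (hp : Equiv.Perm.sign π = 1) : 2 ≤ kendall σ π := by
  obtain ⟨l, hl, hadj, hprod⟩ := Nat.sInf_mem (kendall_set_nonempty σ π)
  change l.length = kendall σ π at hl
  rw [← hl]
  match l, hadj, hprod with
  | [], _, hprod => exact absurd (by simpa using hprod) hne
  | [s], hadj, hprod =>
    obtain ⟨i, j, hij, rfl⟩ := hadj s (by simp)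
    have hne' : i ≠ j := by
      rintro rfl
      omega
    rw [← hprod, List.prod_singleton, map_mul, hs, Equiv.Perm.sign_swap hne'] at hp
    exact absurd hp (by decide)
  | _ :: _ :: _, _, _ => simp


/-- There exists a `(5,57,K)`-snake: a cyclic sequence of 57 distinct even permutations of
`S_5` in which consecutive elements (cyclically) differ by a push-to-the-top operation on an
odd index (`t_3` or `t_5`, i.e. even 0-indexed position), and any two distinct codewords are
at Kendall's τ-distance at least 2. -/
theorem stmt_17 :
    ∃ c : Fin 57 → Equiv.Perm (Fin 5),
      Function.Injective c ∧
      (∀ k : Fin 57, ∃ i : Fin 5, Even (i : ℕ) ∧ c (k + 1) = pushToTop i (c k)) ∧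
      (∀ k : Fin 57, Equiv.Perm.sign (c k) = 1) ∧
      (∀ k l : Fin 57, k ≠ l → 2 ≤ kendall (c k) (c l)) := by
  exact ⟨snakePerm, snake_injective, snake_step, snake_sign, fun k l hkl =>
    two_le_kendall _ _ (snake_injective.ne hkl) (snake_sign k) (snake_sign l)⟩
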